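/- (Matrix Capelli identity, skew-symmetric form.) Let R be a Hecke symmetry with parameter q such that j_q ≠ 0 for 2 ≤ j ≤ k, let M and D be N×N matrices with entries in a unital associative ℂ-algebra 𝒜 satisfying the Reflection Equation R M₁ R M₁ = M₁ R M₁ R, the relation R⁻¹ D₁ R⁻¹ D₁ = D₁ R⁻¹ D₁ R⁻¹, and the permutation relations D₁ R M₁ = R M₁ R⁻¹ D₁ R⁻¹ + I, and set L := M D. Then for every k ≥ 1, as an identity of N^k×N^k matrices over 𝒜: A^(k) L_{1̄} (L_{2̄} + q·I) (L_{3̄} + q²·2_q·I) ⋯ (L_{k̄} + q^{k−1}·(k−1)_q·I) A^(k) = q^{k(k−1)} A^(k) M_{1̄} ⋯ M_{k̄} D_{k̄} ⋯ D_{1̄}. -/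

import Mathlib

open Matrix BigOperators

noncomputable section

/-- An `N² × N²` complex matrix, viewed as an operator on `ℂ^N ⊗ ℂ^N`. -/
abbrev RMat (N : ℕ) := Matrix (Fin N × Fin N) (Fin N × Fin N) ℂ

/-- A matrix on the `k`-th tensor power of `ℂ^N`, with entries in `A`. -/
abbrev TMat (N k : ℕ) (A : Type _) := Matrix (Fin k → Fin N) (Fin k → Fin N) A

/-- The `q`-number `j_q = (q^j - q^{-j})/(q - q^{-1})`. -/
def qNum (q : ℂ) (j : ℕ) : ℂ := (q ^ j - q⁻¹ ^ j) / (q - q⁻¹)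

/-- Embedding of an `N²×N²` matrix `R` into the `k`-th tensor power,
acting in the (0-based) tensor factors `i` and `i+1`.  The paper's `R_i`
(1-based) is `embR k R (i-1)`. -/
def embR {N : ℕ} (k : ℕ) (R : RMat N) (i : ℕ) : TMat N k ℂ := fun f g =>
  if h : i + 1 < k then
    if ∀ j : Fin k, j.val ≠ i → j.val ≠ i + 1 → f j = g j then
      R (f ⟨i, Nat.lt_of_succ_lt h⟩, f ⟨i + 1, h⟩) (g ⟨i, Nat.lt_of_succ_lt h⟩, g ⟨i + 1, h⟩)
    else 0
  else (1 : TMat N k ℂ) f g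

/-- `X ⊗ I^{⊗(k-1)}` : the first copy `X_{1̄}` of an `N×N` matrix over `A`. -/
def emb1 {N : ℕ} (k : ℕ) {A : Type _} [Ring A] (X : Matrix (Fin N) (Fin N) A) :
    TMat N k A := fun f g =>
  if h : 0 < k then
    if ∀ j : Fin k, j.val ≠ 0 → f j = g j then X (f ⟨0, h⟩) (g ⟨0, h⟩) else 0
  else (1 : TMat N k A) f g

/-- Lift a complex matrix to a matrix over the `ℂ`-algebra `A`. -/
def liftC {N k : ℕ} (A : Type _) [Ring A] [Algebra ℂ A] (X : TMat N k ℂ) : TMat N k A :=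
  X.map (algebraMap ℂ A)

/-- The copies `X_{1̄}, X_{2̄}, …` of `X` in the `k`-th tensor power:
`copyX k R Rinv X i` is the paper's `X_{\overline{i+1}}`, i.e.
`X_{1̄} = X ⊗ I^{⊗(k-1)}` and `X_{\overline{i+1}} = R_i X_{ī} R_i⁻¹`. -/
def copyX {N : ℕ} (k : ℕ) (R Rinv : RMat N) {A : Type _} [Ring A] [Algebra ℂ A]
    (X : Matrix (Fin N) (Fin N) A) : ℕ → TMat N k A
  | 0 => emb1 k X
  | i + 1 => liftC A (embR k R i) * copyX k R Rinv X i * liftC A (embR k Rinv i)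

/-- The `R`-skew-symmetrizers, on the ambient `k`-th tensor power:
`Asym k R q j` is `A^{(j)}` (acting in the first `j` factors). -/
def Asym {N : ℕ} (k : ℕ) (R : RMat N) (q : ℂ) : ℕ → TMat N k ℂ
  | 0 => 1
  | 1 => 1
  | j + 2 =>
      (qNum q (j + 2))⁻¹ •
        (Asym k R q (j + 1) *
          ((q ^ (j + 1)) • (1 : TMat N k ℂ) - (qNum q (j + 1)) • embR k R j) *
          Asym k R q (j + 1))

/-- The `R`-symmetrizers, on the ambient `k`-th tensor power:
`Ssym k R q j` is `S^{(j)}` (acting in the first `j` factors). -/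
def Ssym {N : ℕ} (k : ℕ) (R : RMat N) (q : ℂ) : ℕ → TMat N k ℂ
  | 0 => 1
  | 1 => 1
  | j + 2 =>
      (qNum q (j + 2))⁻¹ •
        (Ssym k R q (j + 1) *
          ((q⁻¹ ^ (j + 1)) • (1 : TMat N k ℂ) + (qNum q (j + 1)) • embR k R j) *
          Ssym k R q (j + 1))

/-- The braid relation `R₁₂ R₂₃ R₁₂ = R₂₃ R₁₂ R₂₃` on `(ℂ^N)^{⊗3}`. -/
def IsBraiding {N : ℕ} (R : RMat N) : Prop :=
  embR 3 R 0 * embR 3 R 1 * embR 3 R 0 = embR 3 R 1 * embR 3 R 0 * embR 3 R 1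

/-- The Hecke condition `(q·I − R)(q⁻¹·I + R) = 0`. -/
def HeckeCond {N : ℕ} (R : RMat N) (q : ℂ) : Prop :=
  (q • (1 : RMat N) - R) * (q⁻¹ • (1 : RMat N) + R) = 0

/-- The Reflection Equation `R M₁ R M₁ = M₁ R M₁ R` (on `(ℂ^N)^{⊗2}`,
with entries in `A`). -/
def RERel {N : ℕ} (R : RMat N) {A : Type _} [Ring A] [Algebra ℂ A]
    (M : Matrix (Fin N) (Fin N) A) : Prop :=
  liftC A (embR 2 R 0) * emb1 2 M * liftC A (embR 2 R 0) * emb1 2 M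
    = emb1 2 M * liftC A (embR 2 R 0) * emb1 2 M * liftC A (embR 2 R 0)

/-- The relation `R⁻¹ D₁ R⁻¹ D₁ = D₁ R⁻¹ D₁ R⁻¹` on the matrix `D`,
where `Rinv = R⁻¹`. -/
def DDRel {N : ℕ} (Rinv : RMat N) {A : Type _} [Ring A] [Algebra ℂ A]
    (D : Matrix (Fin N) (Fin N) A) : Prop :=
  liftC A (embR 2 Rinv 0) * emb1 2 D * liftC A (embR 2 Rinv 0) * emb1 2 D
    = emb1 2 D * liftC A (embR 2 Rinv 0) * emb1 2 D * liftC A (embR 2 Rinv 0)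

/-- The permutation relations `D₁ R M₁ = R M₁ R⁻¹ D₁ R⁻¹ + I`, where `Rinv = R⁻¹`. -/
def PermRel {N : ℕ} (R Rinv : RMat N) {A : Type _} [Ring A] [Algebra ℂ A]
    (M D : Matrix (Fin N) (Fin N) A) : Prop :=
  emb1 2 D * liftC A (embR 2 R 0) * emb1 2 M
    = liftC A (embR 2 R 0) * emb1 2 M * liftC A (embR 2 Rinv 0) * emb1 2 D *
        liftC A (embR 2 Rinv 0) + 1

/-- `Ψ` is the skew-inverse of `R`:  `Σ_{j,b} R^{ij}_{ab} Ψ^{bc}_{jd} = δ^i_d δ^c_a`. -/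
def SkewInv {N : ℕ} (R Ψ : RMat N) : Prop :=
  ∀ i a c d : Fin N,
    (∑ j : Fin N, ∑ b : Fin N, R (i, j) (a, b) * Ψ (b, c) (j, d))
      = if i = d ∧ c = a then 1 else 0

/-- The matrix `C`, `C^c_d = Σ_i Ψ^{ic}_{id}`. -/
def Cmat {N : ℕ} (Ψ : RMat N) : Matrix (Fin N) (Fin N) ℂ :=
  fun c d => ∑ i : Fin N, Ψ (i, c) (i, d)

/-- The `R`-trace over all `k` tensor factors: `⟨X⟩_{1…k} = Tr(C^{⊗k} X)`. -/
def rTr {N k : ℕ} {A : Type _} [Ring A] [Algebra ℂ A] (C : Matrix (Fin N) (Fin N) ℂ)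
    (X : TMat N k A) : A :=
  ∑ f : Fin k → Fin N, ∑ g : Fin k → Fin N, (∏ j : Fin k, C (f j) (g j)) • X g f

/-- The chain `X_{1̄} X_{2̄} ⋯ X_{n̄}`. -/
def upChain {N : ℕ} (k : ℕ) (R Rinv : RMat N) {A : Type _} [Ring A] [Algebra ℂ A]
    (X : Matrix (Fin N) (Fin N) A) (n : ℕ) : TMat N k A :=
  ((List.range n).map (copyX k R Rinv X)).prod

/-- The reversed chain `X_{n̄} X_{\overline{n-1}} ⋯ X_{1̄}`. -/
def downChain {N : ℕ} (k : ℕ) (R Rinv : RMat N) {A : Type _} [Ring A] [Algebra ℂ A]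
    (X : Matrix (Fin N) (Fin N) A) (n : ℕ) : TMat N k A :=
  ((List.range n).reverse.map (copyX k R Rinv X)).prod

/-- The Capelli chain `L_{1̄}(L_{2̄} + q·1_q I)(L_{3̄} + q²·2_q I) ⋯ (L_{n̄} + q^{n-1}·(n-1)_q I)`
(note `0_q = 0`). -/
def capChainA {N : ℕ} (k : ℕ) (R Rinv : RMat N) (q : ℂ) {A : Type _} [Ring A] [Algebra ℂ A]
    (L : Matrix (Fin N) (Fin N) A) (n : ℕ) : TMat N k A :=
  ((List.range n).map
    (fun i => copyX k R Rinv L i + ((q ^ i) * qNum q i) • (1 : TMat N k A))).prod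

/-- The symmetric Capelli chain
`L_{1̄}(L_{2̄} - q⁻¹·1_q I) ⋯ (L_{n̄} - q^{-(n-1)}·(n-1)_q I)`. -/
def capChainS {N : ℕ} (k : ℕ) (R Rinv : RMat N) (q : ℂ) {A : Type _} [Ring A] [Algebra ℂ A]
    (L : Matrix (Fin N) (Fin N) A) (n : ℕ) : TMat N k A :=
  ((List.range n).map
    (fun i => copyX k R Rinv L i - ((q⁻¹ ^ i) * qNum q i) • (1 : TMat N k A))).prod

/-- The descending chain `R_{a→b} = R_a R_{a-1} ⋯ R_b` (1-based indices;
identity when `b > a`). -/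
def rChainDesc {N : ℕ} (k : ℕ) (R : RMat N) (a b : ℕ) : TMat N k ℂ :=
  ((List.range' b (a + 1 - b)).reverse.map (fun j => embR k R (j - 1))).prod

/-- The ascending chain `R_{b→a} = R_b R_{b+1} ⋯ R_a` (1-based indices;
identity when `b > a`). -/
def rChainAsc {N : ℕ} (k : ℕ) (R : RMat N) (b a : ℕ) : TMat N k ℂ :=
  ((List.range' b (a + 1 - b)).map (fun j => embR k R (j - 1))).prod

/-!
Conjugation by `R_i R_{i+1}` carries every relation between `R`, `M`, `D` from the tensor factors
`i, i+1` to `i+1, i+2`, so all relations hold at every site. Multiplied by a skew-symmetric `b`,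
on which the `R_j` act as `-q⁻¹`, the permutation relation becomes `D_i L_l b = (q² L_l - q) D_i b`
for all `i < l`. Pushing the factors of `D_{n-1} ⋯ D_1` through `L_n` one after the other, the
terms `-q` add up to `-q^{n-1} (n-1)_q`, which is exactly what the shift in the factor
`L_n + q^{n-1} (n-1)_q` cancels; induction on `n` then turns the Capelli product into
`M_1 ⋯ M_n D_n ⋯ D_1`, each step contributing a power `q^{2(n-1)}`. Finally, the skew-symmetrizer is
an idempotent commuting with both chains, which disposes of the second copy of `A^(k)`.
-/

section Conjugation

variable {B : Type*} [Monoid B]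

theorem conjAct_smul_eq_iff_commute (u : Bˣ) (x : B) :
    ConjAct.toConjAct u • x = x ↔ Commute (u : B) x :=
  Units.mul_inv_eq_iff_eq_mul u

/-- The copies `x_{1̄}, x_{2̄}, …` of `x`, each obtained from the preceding one by conjugation with
the next generator; indexed from `0`, so that `barCopy r x i` is `x_{\overline{i+1}}`. -/
def barCopy (r : ℕ → Bˣ) (x : B) : ℕ → B
  | 0 => x
  | i + 1 => ConjAct.toConjAct (r i) • barCopy r x i

theorem barCopy_succ (r : ℕ → Bˣ) (x : B) (i : ℕ) :
    barCopy r x (i + 1) = r i * barCopy r x i * ↑(r i)⁻¹ :=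
  rfl

theorem barCopy_mul (r : ℕ → Bˣ) (x y : B) (i : ℕ) :
    barCopy r (x * y) i = barCopy r x i * barCopy r y i := by
  induction i with
  | zero => rfl
  | succ i ih => rw [barCopy, ih, smul_mul']; rfl

/-- The conjugation carrying objects attached to the tensor factors `i, i + 1` to the same objects
attached to the factors `i + 1, i + 2`. -/
def siteShift (r : ℕ → Bˣ) (i : ℕ) : ConjAct Bˣ :=
  ConjAct.toConjAct (r i * r (i + 1))

/-- `x` acts in the first of `n` tensor factors: it commutes with the generators
`r 1, …, r (n - 2)`, which act in the other ones. -/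
def ActsOnFirst (n : ℕ) (r : ℕ → Bˣ) (x : B) : Prop :=
  ∀ i, 1 ≤ i → i + 1 < n → Commute (r i : B) x

theorem ActsOnFirst.mul {n : ℕ} {r : ℕ → Bˣ} {x y : B} (hx : ActsOnFirst n r x)
    (hy : ActsOnFirst n r y) : ActsOnFirst n r (x * y) :=
  fun i hi hin => (hx i hi hin).mul_right (hy i hi hin)

end Conjugation

/-- `r 0, …, r (n - 2)` satisfy the relations of the standard generators of the braid group on `n`
strands. The other values of `r` are unconstrained. -/
structure IsBraidFamily {G : Type*} [Group G] (n : ℕ) (r : ℕ → G) : Prop where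
  commute : ∀ i j, i + 1 < j → j + 1 < n → Commute (r i) (r j)
  braid : ∀ i, i + 2 < n → r i * r (i + 1) * r i = r (i + 1) * r i * r (i + 1)

namespace IsBraidFamily

theorem conj_eq_succ {G : Type*} [Group G] {n : ℕ} {r : ℕ → G} (hr : IsBraidFamily n r) {i : ℕ}
    (hi : i + 2 < n) : r i * r (i + 1) * r i * (r i * r (i + 1))⁻¹ = r (i + 1) := by
  rw [mul_inv_eq_iff_eq_mul, hr.braid i hi, mul_assoc]

section Monoid

variable {B : Type*} [Monoid B] {n : ℕ} {r : ℕ → Bˣ} (hr : IsBraidFamily n r)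
include hr

theorem siteShift_smul_gen {i : ℕ} (hi : i + 2 < n) :
    siteShift r i • (r i : B) = r (i + 1) :=
  congrArg Units.val (hr.conj_eq_succ hi)

theorem siteShift_smul_gen_inv {i : ℕ} (hi : i + 2 < n) :
    siteShift r i • (↑(r i)⁻¹ : B) = ↑(r (i + 1))⁻¹ := by
  have h : r i * r (i + 1) * (r i)⁻¹ * (r i * r (i + 1))⁻¹ = (r (i + 1))⁻¹ := by
    rw [← conj_inv, hr.conj_eq_succ hi]
  exact congrArg Units.val h

theorem commute_gen {i j : ℕ} (hij : i + 1 < j) (hj : j + 1 < n) : Commute (r i : B) (r j) :=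
  (hr.commute i j hij hj).map (Units.coeHom B)

variable {x : B} (hx : ActsOnFirst n r x)
include hx

theorem commute_barCopy_of_lt {l j : ℕ} (hlj : l < j) (hj : j + 1 < n) :
    Commute (r j : B) (barCopy r x l) := by
  induction l with
  | zero => exact hx j hlj hj
  | succ l ih =>
    have hjl : Commute (r j : B) (r l) := (hr.commute_gen hlj hj).symm
    exact (hjl.mul_right (ih (by omega))).mul_right hjl.units_inv_right

theorem commute_barCopy_add_two {j : ℕ} (hj : j + 2 < n) :
    Commute (r j : B) (barCopy r x (j + 2)) := by
  have hfix : ConjAct.toConjAct (r (j + 1)) • barCopy r x j = barCopy r x j :=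
    (conjAct_smul_eq_iff_commute _ _).mpr (hr.commute_barCopy_of_lt hx (lt_add_one j) hj)
  rw [← conjAct_smul_eq_iff_commute, barCopy, barCopy]
  calc ConjAct.toConjAct (r j) • ConjAct.toConjAct (r (j + 1)) •
        ConjAct.toConjAct (r j) • barCopy r x j
      = ConjAct.toConjAct (r j * r (j + 1) * r j) • barCopy r x j := by
        simp only [map_mul, mul_smul]
    _ = ConjAct.toConjAct (r (j + 1)) • ConjAct.toConjAct (r j) •
          ConjAct.toConjAct (r (j + 1)) • barCopy r x j := by
        simp only [hr.braid j hj, map_mul, mul_smul]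
    _ = ConjAct.toConjAct (r (j + 1)) • ConjAct.toConjAct (r j) • barCopy r x j := by rw [hfix]

theorem commute_barCopy_of_add_one_lt {l j : ℕ} (hjl : j + 1 < l) (hl : l < n) :
    Commute (r j : B) (barCopy r x l) := by
  induction l, (show j + 2 ≤ l from hjl) using Nat.le_induction with
  | base => exact hr.commute_barCopy_add_two hx hl
  | succ l hjl' ih =>
    have hgen : Commute (r j : B) (r l) := hr.commute_gen hjl' hl
    exact (hgen.mul_right (ih hjl' (by omega))).mul_right hgen.units_inv_right

theorem siteShift_smul_barCopy {i : ℕ} (hi : i + 2 < n) :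
    siteShift r i • barCopy r x i = barCopy r x (i + 1) := by
  have hfix : ConjAct.toConjAct (r (i + 1)) • barCopy r x i = barCopy r x i :=
    (conjAct_smul_eq_iff_commute _ _).mpr (hr.commute_barCopy_of_lt hx (lt_add_one i) hi)
  rw [siteShift, map_mul, mul_smul, hfix, barCopy]

theorem reflection_barCopy (h : Commute (r 0 : B) (x * r 0 * x)) {i : ℕ} (hi : i + 1 < n) :
    Commute (r i : B) (barCopy r x i * r i * barCopy r x i) := by
  induction i with
  | zero => exact h
  | succ i ih =>
    have hshift := congrArg (siteShift r i • ·) (ih (by omega)).eq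
    simpa only [commute_iff_eq, smul_mul', hr.siteShift_smul_gen hi,
      hr.siteShift_smul_barCopy hx hi] using hshift

theorem inv_reflection_barCopy (h : Commute (r 0 : B) (x * ↑(r 0)⁻¹ * x)) {i : ℕ}
    (hi : i + 1 < n) : Commute (r i : B) (barCopy r x i * ↑(r i)⁻¹ * barCopy r x i) := by
  induction i with
  | zero => exact h
  | succ i ih =>
    have hshift := congrArg (siteShift r i • ·) (ih (by omega)).eq
    simpa only [commute_iff_eq, smul_mul', hr.siteShift_smul_gen hi,
      hr.siteShift_smul_gen_inv hi, hr.siteShift_smul_barCopy hx hi] using hshift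

theorem commute_barCopy_mul_barCopy_succ (h : Commute (r 0 : B) (x * r 0 * x)) {i : ℕ}
    (hi : i + 1 < n) : Commute (r i : B) (barCopy r x i * barCopy r x (i + 1)) := by
  rw [barCopy_succ, ← mul_assoc, ← mul_assoc]
  exact (hr.reflection_barCopy hx h hi).mul_right (Commute.refl _).units_inv_right

theorem commute_barCopy_succ_mul_barCopy (h : Commute (r 0 : B) (x * ↑(r 0)⁻¹ * x)) {i : ℕ}
    (hi : i + 1 < n) : Commute (r i : B) (barCopy r x (i + 1) * barCopy r x i) := by
  rw [barCopy_succ, mul_assoc, mul_assoc, ← mul_assoc (barCopy r x i)]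
  exact (Commute.refl _).mul_right (hr.inv_reflection_barCopy hx h hi)

end Monoid

theorem permutation_barCopy {B : Type*} [Ring B] {n : ℕ} {r : ℕ → Bˣ} (hr : IsBraidFamily n r)
    {m d : B} (hm : ActsOnFirst n r m) (hd : ActsOnFirst n r d)
    (h : d * r 0 * m = r 0 * m * ↑(r 0)⁻¹ * d * ↑(r 0)⁻¹ + 1) {i : ℕ} (hi : i + 1 < n) :
    barCopy r d i * r i * barCopy r m i
      = barCopy r m (i + 1) * barCopy r d i * ↑(r i)⁻¹ + 1 := by
  induction i with
  | zero => exact h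
  | succ i ih =>
    have hshift := congrArg (siteShift r i • ·) (ih (by omega))
    simpa only [barCopy_succ, smul_mul', smul_add, smul_one, hr.siteShift_smul_gen hi,
      hr.siteShift_smul_gen_inv hi, hr.siteShift_smul_barCopy hm hi,
      hr.siteShift_smul_barCopy hd hi] using hshift

end IsBraidFamily

section Chains

variable {B : Type*} [Monoid B]

/-- The ascending product `x_{1̄} x_{2̄} ⋯ x_{n̄}` of copies of `x`. -/
def ascChain (r : ℕ → Bˣ) (x : B) (n : ℕ) : B :=
  ((List.range n).map (barCopy r x)).prod

/-- The descending product `x_{n̄} ⋯ x_{2̄} x_{1̄}` of copies of `x`. -/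
def descChain (r : ℕ → Bˣ) (x : B) (n : ℕ) : B :=
  ((List.range n).reverse.map (barCopy r x)).prod

theorem ascChain_succ (r : ℕ → Bˣ) (x : B) (n : ℕ) :
    ascChain r x (n + 1) = ascChain r x n * barCopy r x n :=
  List.prod_range_succ _ n

theorem descChain_succ (r : ℕ → Bˣ) (x : B) (n : ℕ) :
    descChain r x (n + 1) = barCopy r x n * descChain r x n := by
  simp [descChain, List.range_succ]

namespace IsBraidFamily

variable {n : ℕ} {r : ℕ → Bˣ} (hr : IsBraidFamily n r) {x : B} (hx : ActsOnFirst n r x)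
include hr hx

theorem commute_ascChain_of_le {l j : ℕ} (hlj : l ≤ j) (hj : j + 1 < n) :
    Commute (r j : B) (ascChain r x l) := by
  refine Commute.list_prod_right _ _ fun y hy => ?_
  obtain ⟨i, hi, rfl⟩ := List.mem_map.mp hy
  exact hr.commute_barCopy_of_lt hx ((List.mem_range.mp hi).trans_le hlj) hj

theorem commute_descChain_of_le {l j : ℕ} (hlj : l ≤ j) (hj : j + 1 < n) :
    Commute (r j : B) (descChain r x l) := by
  refine Commute.list_prod_right _ _ fun y hy => ?_
  obtain ⟨i, hi, rfl⟩ := List.mem_map.mp hy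
  exact hr.commute_barCopy_of_lt hx
    ((List.mem_range.mp (List.mem_reverse.mp hi)).trans_le hlj) hj

theorem commute_ascChain (h : Commute (r 0 : B) (x * r 0 * x)) {l j : ℕ} (hjl : j + 1 < l)
    (hl : l ≤ n) : Commute (r j : B) (ascChain r x l) := by
  induction l, (show j + 2 ≤ l from hjl) using Nat.le_induction with
  | base =>
    rw [ascChain_succ, ascChain_succ, mul_assoc]
    exact (hr.commute_ascChain_of_le hx le_rfl hl).mul_right
      (hr.commute_barCopy_mul_barCopy_succ hx h hl)
  | succ l hjl' ih =>
    rw [ascChain_succ]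
    exact (ih hjl' (by omega)).mul_right (hr.commute_barCopy_of_add_one_lt hx hjl' hl)

theorem commute_descChain (h : Commute (r 0 : B) (x * ↑(r 0)⁻¹ * x)) {l j : ℕ} (hjl : j + 1 < l)
    (hl : l ≤ n) : Commute (r j : B) (descChain r x l) := by
  induction l, (show j + 2 ≤ l from hjl) using Nat.le_induction with
  | base =>
    rw [descChain_succ, descChain_succ, ← mul_assoc]
    exact (hr.commute_barCopy_succ_mul_barCopy hx h hl).mul_right
      (hr.commute_descChain_of_le hx le_rfl hl)
  | succ l hjl' ih =>
    rw [descChain_succ]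
    exact (hr.commute_barCopy_of_add_one_lt hx hjl' hl).mul_right (ih hjl' (by omega))

end IsBraidFamily

end Chains

section QNumbers

variable {q : ℂ}

theorem sub_inv_ne_zero (hq0 : q ≠ 0) (hq2 : q ^ 2 ≠ 1) : q - q⁻¹ ≠ 0 := by
  field_simp
  exact div_ne_zero (sub_ne_zero.mpr hq2) hq0

theorem qNum_zero : qNum q 0 = 0 := by
  simp [qNum]

theorem qNum_one (hq0 : q ≠ 0) (hq2 : q ^ 2 ≠ 1) : qNum q 1 = 1 := by
  simp [qNum, div_self (sub_inv_ne_zero hq0 hq2)]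

theorem qNum_succ (hq0 : q ≠ 0) (hq2 : q ^ 2 ≠ 1) (j : ℕ) :
    qNum q (j + 1) = q ^ j + q⁻¹ * qNum q j := by
  have hne := sub_inv_ne_zero hq0 hq2
  rw [qNum, qNum, div_eq_iff hne, add_mul, mul_assoc, div_mul_cancel₀ _ hne]
  ring

theorem pow_mul_qNum_succ (hq0 : q ≠ 0) (hq2 : q ^ 2 ≠ 1) (j : ℕ) :
    q ^ (j + 1) * qNum q (j + 1) = q ^ (2 * j + 1) + q ^ j * qNum q j := by
  rw [qNum_succ hq0 hq2]
  field_simp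
  ring

end QNumbers

section SkewSymmetrizers

variable {B : Type*} [Ring B] [Algebra ℂ B]

/-- `b` is `q`-skew-symmetric on the tensor factors `a, …, n - 1` (counted from `0`): the generators
acting there multiply it by the eigenvalue `-q⁻¹`. -/
def IsSkew (q : ℂ) (r : ℕ → Bˣ) (a n : ℕ) (b : B) : Prop :=
  ∀ j, a ≤ j → j + 1 < n → r j * b = (-q⁻¹) • b

/-- The skew-symmetrizer `A^(n)` of a family of Hecke generators. -/
def skewSymmetrizer (q : ℂ) (r : ℕ → Bˣ) : ℕ → B
  | 0 => 1
  | 1 => 1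
  | n + 2 => (qNum q (n + 2))⁻¹ • (skewSymmetrizer q r (n + 1) *
      (q ^ (n + 1) • (1 : B) - qNum q (n + 1) • (r n : B)) * skewSymmetrizer q r (n + 1))

/-- Braid generators satisfying the quadratic relation `(q - r) (q⁻¹ + r) = 0`, in expanded form. -/
structure IsHeckeFamily (n : ℕ) (q : ℂ) (r : ℕ → Bˣ) : Prop extends IsBraidFamily n r where
  hecke : ∀ i, i + 1 < n → (r i * r i : B) = (q - q⁻¹) • (r i : B) + 1

variable {q : ℂ} {r : ℕ → Bˣ}

namespace IsSkew

variable {a n : ℕ} {b : B}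

theorem mono {a' n' : ℕ} (hb : IsSkew q r a n b) (ha : a ≤ a') (hn : n' ≤ n) :
    IsSkew q r a' n' b :=
  fun j haj hjn => hb j (ha.trans haj) (hjn.trans_le hn)

theorem mul_left (hb : IsSkew q r a n b) {x : B}
    (hx : ∀ j, a ≤ j → j + 1 < n → Commute (r j : B) x) : IsSkew q r a n (x * b) := by
  intro j haj hjn
  rw [← mul_assoc, (hx j haj hjn).eq, mul_assoc, hb j haj hjn, mul_smul_comm]

theorem inv_mul (hb : IsSkew q r a n b) (hq0 : q ≠ 0) {j : ℕ} (haj : a ≤ j) (hjn : j + 1 < n) :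
    ↑(r j)⁻¹ * b = (-q) • b := by
  rw [Units.inv_mul_eq_iff_eq_mul, mul_smul_comm, hb j haj hjn, smul_smul, neg_mul_neg,
    mul_inv_cancel₀ hq0, one_smul]

theorem skewSymmetrizer_mul {n : ℕ} {b : B} (hb : IsSkew q r 0 n b) (hq0 : q ≠ 0)
    (hq2 : q ^ 2 ≠ 1) (hn : ∀ j, 2 ≤ j → j ≤ n → qNum q j ≠ 0) :
    skewSymmetrizer q r n * b = b := by
  induction n using Nat.twoStepInduction with
  | zero => exact one_mul b
  | one => exact one_mul b
  | more n _ ih =>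
    have hfix : skewSymmetrizer q r (n + 1) * b = b :=
      ih (hb.mono le_rfl (by omega)) fun j h2j hj => hn j h2j (by omega)
    have hfactor : (q ^ (n + 1) • (1 : B) - qNum q (n + 1) • (r n : B)) * b
        = qNum q (n + 2) • b := by
      rw [sub_mul, smul_one_mul, smul_mul_assoc, hb n n.zero_le (by omega), smul_smul, ← sub_smul,
        qNum_succ hq0 hq2 (n + 1)]
      ring_nf
    rw [skewSymmetrizer, smul_mul_assoc, mul_assoc, hfix, mul_assoc, hfactor, mul_smul_comm, hfix,
      inv_smul_smul₀ (hn (n + 2) (by omega) le_rfl)]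

end IsSkew

theorem commute_skewSymmetrizer {x : B} {n : ℕ} (h : ∀ j, j + 1 < n → Commute (r j : B) x) :
    Commute (skewSymmetrizer q r n) x := by
  induction n using Nat.twoStepInduction with
  | zero => exact Commute.one_left x
  | one => exact Commute.one_left x
  | more n _ ih =>
    have hA : Commute (skewSymmetrizer q r (n + 1)) x := ih fun j hj => h j (by omega)
    have hfactor : Commute (q ^ (n + 1) • (1 : B) - qNum q (n + 1) • (r n : B)) x :=
      ((Commute.one_left x).smul_left _).sub_left ((h n (by omega)).smul_left _)
    exact ((hA.mul_left hfactor).mul_left hA).smul_left _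

namespace IsHeckeFamily

variable {K : ℕ}

theorem gen_mul_skewSymmetrizer_two (hr : IsHeckeFamily K q r) (hK : 1 < K) (hq0 : q ≠ 0)
    (hq2 : q ^ 2 ≠ 1) :
    r 0 * skewSymmetrizer q r 2 = (-q⁻¹) • skewSymmetrizer q r 2 := by
  simp only [skewSymmetrizer, one_mul, mul_one, zero_add, pow_one, qNum_one hq0 hq2, one_smul,
    mul_smul_comm, mul_sub, hr.hecke 0 hK]
  rw [smul_comm (-q⁻¹), smul_sub (-q⁻¹), smul_smul (-q⁻¹), neg_mul, inv_mul_cancel₀ hq0]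
  module

variable {n : ℕ}

-- The right-hand side is arranged so that left multiplication by `r (n + 1)` can be computed term
-- by term: by the Hecke relation on the first two terms, by the braid relation on the third.
theorem skewSymmetrizer_mul_factor_mul (hr : IsHeckeFamily K q r) (hnK : n + 2 < K)
    (hq0 : q ≠ 0) (hq2 : q ^ 2 ≠ 1) (hn : ∀ j, 2 ≤ j → j ≤ n + 2 → qNum q j ≠ 0)
    (hskew : IsSkew q r 0 (n + 2) (skewSymmetrizer q r (n + 2))) :
    skewSymmetrizer q r (n + 2) * (q ^ (n + 2) • (1 : B) - qNum q (n + 2) • (r (n + 1) : B)) *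
        skewSymmetrizer q r (n + 2)
      = q ^ (n + 2) • skewSymmetrizer q r (n + 2)
        - q ^ (n + 1) • (r (n + 1) * skewSymmetrizer q r (n + 2))
        + qNum q (n + 1) • (skewSymmetrizer q r (n + 1) *
            (r n * (r (n + 1) * skewSymmetrizer q r (n + 2)))) := by
  have hPP := hskew.skewSymmetrizer_mul hq0 hq2 hn
  have hQP := (hskew.mono le_rfl (Nat.le_succ (n + 1))).skewSymmetrizer_mul hq0 hq2
    fun j h2j hj => hn j h2j (by omega)
  have hQr : Commute (skewSymmetrizer q r (n + 1)) (r (n + 1) : B) :=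
    commute_skewSymmetrizer fun j hj => hr.commute_gen (by omega) (by omega)
  have hP : qNum q (n + 2) • skewSymmetrizer q r (n + 2) = skewSymmetrizer q r (n + 1) *
      (q ^ (n + 1) • (1 : B) - qNum q (n + 1) • (r n : B)) * skewSymmetrizer q r (n + 1) := by
    rw [skewSymmetrizer, smul_inv_smul₀ (hn (n + 2) (by omega) le_rfl)]
  set P : B := skewSymmetrizer q r (n + 2)
  set Q : B := skewSymmetrizer q r (n + 1)
  have hQrP : Q * (r (n + 1) * P) = r (n + 1) * P := by
    rw [← mul_assoc, hQr.eq, mul_assoc, hQP]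
  have hPrP : qNum q (n + 2) • (P * (r (n + 1) * P))
      = q ^ (n + 1) • (r (n + 1) * P) - qNum q (n + 1) • (Q * (r n * (r (n + 1) * P))) := by
    rw [← smul_mul_assoc, hP]
    simp only [mul_assoc, hQrP, sub_mul, mul_sub, one_mul, smul_mul_assoc, mul_smul_comm]
  simp only [mul_sub, sub_mul, mul_smul_comm, smul_mul_assoc, mul_one, mul_assoc, hPP, hPrP]
  abel

theorem gen_mul_skewSymmetrizer_add_three (hr : IsHeckeFamily K q r) (hnK : n + 2 < K)
    (hq0 : q ≠ 0) (hq2 : q ^ 2 ≠ 1) (hn : ∀ j, 2 ≤ j → j ≤ n + 2 → qNum q j ≠ 0)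
    (hskew : IsSkew q r 0 (n + 2) (skewSymmetrizer q r (n + 2))) :
    r (n + 1) * skewSymmetrizer q r (n + 3) = (-q⁻¹) • skewSymmetrizer q r (n + 3) := by
  have hQr : Commute (r (n + 1) : B) (skewSymmetrizer q r (n + 1)) :=
    (commute_skewSymmetrizer fun j hj => hr.commute_gen (by omega) (by omega)).symm
  have hrP : r n * skewSymmetrizer q r (n + 2) = (-q⁻¹) • skewSymmetrizer q r (n + 2) :=
    hskew n n.zero_le (by omega)
  rw [skewSymmetrizer, hr.skewSymmetrizer_mul_factor_mul hnK hq0 hq2 hn hskew, mul_smul_comm,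
    smul_comm (-q⁻¹)]
  congr 1
  set P : B := skewSymmetrizer q r (n + 2)
  set Q : B := skewSymmetrizer q r (n + 1)
  have hhecke : r (n + 1) * (r (n + 1) * P) = (q - q⁻¹) • (r (n + 1) * P) + P := by
    rw [← mul_assoc, hr.hecke _ hnK, add_mul, smul_mul_assoc, one_mul]
  have hbraid : r (n + 1) * (Q * (r n * (r (n + 1) * P)))
      = (-q⁻¹) • (Q * (r n * (r (n + 1) * P))) := by
    have hbraid' : (r n * r (n + 1) * r n : B) = r (n + 1) * r n * r (n + 1) :=
      congrArg Units.val (hr.braid n hnK)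
    calc r (n + 1) * (Q * (r n * (r (n + 1) * P)))
        = Q * (r (n + 1) * r n * r (n + 1) * P) := by
          rw [← mul_assoc, hQr.eq]; simp only [mul_assoc]
      _ = Q * (r n * (r (n + 1) * (r n * P))) := by rw [← hbraid']; simp only [mul_assoc]
      _ = (-q⁻¹) • (Q * (r n * (r (n + 1) * P))) := by rw [hrP]; simp only [mul_smul_comm]
  simp only [mul_add, mul_sub, mul_smul_comm, hhecke, hbraid]
  match_scalars <;> field_simp <;> ring

theorem isSkew_skewSymmetrizer (hr : IsHeckeFamily K q r) (hq0 : q ≠ 0) (hq2 : q ^ 2 ≠ 1)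
    (hnK : n ≤ K) (hn : ∀ j, 2 ≤ j → j ≤ n → qNum q j ≠ 0) :
    IsSkew q r 0 n (skewSymmetrizer q r n) := by
  induction n using Nat.twoStepInduction with
  | zero => intro j _ hj; omega
  | one => intro j _ hj; omega
  | more n _ ih =>
    have hskew : IsSkew q r 0 (n + 1) (skewSymmetrizer q r (n + 1)) :=
      ih (by omega) fun j h2j hj => hn j h2j (by omega)
    intro j _ hj
    rcases Nat.lt_or_ge (j + 1) (n + 1) with hjn | hjn
    · rw [skewSymmetrizer, mul_smul_comm, mul_assoc, ← mul_assoc, hskew j j.zero_le hjn,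
        smul_mul_assoc, smul_comm]
    obtain rfl : j = n := by omega
    cases j with
    | zero => exact hr.gen_mul_skewSymmetrizer_two hnK hq0 hq2
    | succ p =>
      exact hr.gen_mul_skewSymmetrizer_add_three hnK hq0 hq2
        (fun j h2j hj => hn j h2j (by omega)) hskew

end IsHeckeFamily

end SkewSymmetrizers

section CapelliChain

variable {B : Type*} [Ring B] [Algebra ℂ B]

/-- The Capelli product `x_{1̄} (x_{2̄} + q · 1_q) ⋯ (x_{n̄} + q^(n-1) · (n-1)_q)`. -/
def capelliChain (q : ℂ) (r : ℕ → Bˣ) (x : B) (n : ℕ) : B :=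
  ((List.range n).map fun i => barCopy r x i + (q ^ i * qNum q i) • (1 : B)).prod

theorem capelliChain_succ (q : ℂ) (r : ℕ → Bˣ) (x : B) (n : ℕ) :
    capelliChain q r x (n + 1)
      = capelliChain q r x n * (barCopy r x n + (q ^ n * qNum q n) • (1 : B)) :=
  List.prod_range_succ _ n

/-- The relations assumed in the matrix Capelli identity, for operators `m` and `d` in the first
tensor factor: the reflection equation for `m`, its analogue with inverse generators for `d`, and
the permutation relation between them. -/
structure IsCapelliPair (n : ℕ) (r : ℕ → Bˣ) (m d : B) : Prop where
  actsOnFirst_left : ActsOnFirst n r m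
  actsOnFirst_right : ActsOnFirst n r d
  reflection : Commute (r 0 : B) (m * r 0 * m)
  inv_reflection : Commute (r 0 : B) (d * ↑(r 0)⁻¹ * d)
  permutation : d * r 0 * m = r 0 * m * ↑(r 0)⁻¹ * d * ↑(r 0)⁻¹ + 1

variable {K : ℕ} {q : ℂ} {r : ℕ → Bˣ} {m d : B} {b : B}

theorem IsSkew.barCopy_succ_mul {a n l : ℕ} {x : B} (hb : IsSkew q r a n b) (hq0 : q ≠ 0)
    (hal : a ≤ l) (hln : l + 1 < n) :
    barCopy r x (l + 1) * b = (-q) • (r l * (barCopy r x l * b)) := by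
  rw [barCopy_succ, mul_assoc, mul_assoc, hb.inv_mul hq0 hal hln, mul_smul_comm, mul_smul_comm]

namespace IsCapelliPair

variable (hr : IsBraidFamily K r) (hmd : IsCapelliPair K r m d)
include hr hmd

theorem barCopy_mul_barCopy_succ_mul {i : ℕ} (hi : i + 1 < K) (hq0 : q ≠ 0)
    (hb : IsSkew q r i (i + 2) b) :
    barCopy r d i * (barCopy r (m * d) (i + 1) * b)
      = q ^ 2 • (barCopy r (m * d) (i + 1) * (barCopy r d i * b)) - q • (barCopy r d i * b) := by
  have hrinv : ↑(r i)⁻¹ * b = (-q) • b := hb.inv_mul hq0 le_rfl (by omega)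
  have hdd : barCopy r d i * (↑(r i)⁻¹ * (barCopy r d i * b))
      = (-q) • (barCopy r d (i + 1) * (barCopy r d i * b)) := by
    have hcomm := (hr.commute_barCopy_succ_mul_barCopy hmd.actsOnFirst_right hmd.inv_reflection
      hi).units_inv_left
    calc barCopy r d i * (↑(r i)⁻¹ * (barCopy r d i * b))
        = ↑(r i)⁻¹ * (barCopy r d (i + 1) * barCopy r d i) * b := by
          simp only [barCopy_succ, mul_assoc, Units.inv_mul_cancel_left]
      _ = (-q) • (barCopy r d (i + 1) * (barCopy r d i * b)) := by
          rw [hcomm.eq, mul_assoc, hrinv, mul_smul_comm, mul_assoc]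
  calc barCopy r d i * (barCopy r (m * d) (i + 1) * b)
      = (-q) • (barCopy r d i * r i * barCopy r m i * (barCopy r d i * b)) := by
        rw [hb.barCopy_succ_mul hq0 le_rfl (by omega), barCopy_mul]
        simp only [mul_smul_comm, mul_assoc]
    _ = (-q) • (barCopy r m (i + 1) * (barCopy r d i * (↑(r i)⁻¹ * (barCopy r d i * b)))
          + barCopy r d i * b) := by
        rw [hr.permutation_barCopy hmd.actsOnFirst_left hmd.actsOnFirst_right hmd.permutation hi,
          add_mul, one_mul]
        simp only [mul_assoc]
    _ = q ^ 2 • (barCopy r (m * d) (i + 1) * (barCopy r d i * b)) - q • (barCopy r d i * b) := by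
        rw [hdd, barCopy_mul, mul_smul_comm, mul_assoc]
        module

theorem barCopy_mul_barCopy_mul {i l : ℕ} (hil : i < l) (hl : l < K) (hq0 : q ≠ 0)
    (hb : IsSkew q r i (l + 1) b) :
    barCopy r d i * (barCopy r (m * d) l * b)
      = q ^ 2 • (barCopy r (m * d) l * (barCopy r d i * b)) - q • (barCopy r d i * b) := by
  induction l, (show i + 1 ≤ l from hil) using Nat.le_induction with
  | base => exact barCopy_mul_barCopy_succ_mul hr hmd hl hq0 hb
  | succ l hil' ih =>
    have hrd : Commute (r l : B) (barCopy r d i) :=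
      hr.commute_barCopy_of_lt hmd.actsOnFirst_right hil' hl
    have hdb : IsSkew q r l (l + 2) (barCopy r d i * b) :=
      (hb.mono (by omega) le_rfl).mul_left fun j hj hjl =>
        hr.commute_barCopy_of_lt hmd.actsOnFirst_right (by omega) (by omega)
    have hrb : r l * (barCopy r d i * b) = (-q⁻¹) • (barCopy r d i * b) :=
      hdb l le_rfl (by omega)
    calc barCopy r d i * (barCopy r (m * d) (l + 1) * b)
        = (-q) • (r l * (barCopy r d i * (barCopy r (m * d) l * b))) := by
          rw [hb.barCopy_succ_mul hq0 (by omega) (by omega), mul_smul_comm, ← mul_assoc,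
            ← hrd.eq, mul_assoc]
      _ = q ^ 2 • (barCopy r (m * d) (l + 1) * (barCopy r d i * b)) - q • (barCopy r d i * b) := by
          rw [ih hil' (by omega) (hb.mono le_rfl (by omega)),
            hdb.barCopy_succ_mul hq0 le_rfl (by omega), mul_sub, mul_smul_comm, mul_smul_comm, hrb]
          match_scalars <;> field_simp

theorem descChain_mul_barCopy_mul {i n : ℕ} (hin : i ≤ n) (hn : n < K) (hq0 : q ≠ 0)
    (hq2 : q ^ 2 ≠ 1) (hb : IsSkew q r 0 (n + 1) b) :
    descChain r d i * (barCopy r (m * d) n * b)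
      = q ^ (2 * i) • (barCopy r (m * d) n * (descChain r d i * b))
        - (q ^ i * qNum q i) • (descChain r d i * b) := by
  induction i with
  | zero => simp [descChain, qNum_zero]
  | succ i ih =>
    have hskew : IsSkew q r i (n + 1) (descChain r d i * b) :=
      (hb.mono i.zero_le le_rfl).mul_left fun j hij hjn =>
        hr.commute_descChain_of_le hmd.actsOnFirst_right hij (by omega)
    have hkey := barCopy_mul_barCopy_mul hr hmd hin hn hq0 hskew
    rw [descChain_succ, mul_assoc, mul_assoc, ih (by omega), mul_sub, mul_smul_comm, mul_smul_comm,
      hkey, pow_mul_qNum_succ hq0 hq2]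
    module

theorem capelliChain_mul {n : ℕ} (hn : n ≤ K) (hq0 : q ≠ 0) (hq2 : q ^ 2 ≠ 1)
    (hb : IsSkew q r 0 n b) :
    capelliChain q r (m * d) n * b
      = q ^ (n * (n - 1)) • (ascChain r m n * (descChain r d n * b)) := by
  induction n generalizing b with
  | zero => simp [capelliChain, ascChain, descChain]
  | succ n ih =>
    have hmd_first : ActsOnFirst K r (m * d) := hmd.actsOnFirst_left.mul hmd.actsOnFirst_right
    have hskew : IsSkew q r 0 n ((barCopy r (m * d) n + (q ^ n * qNum q n) • (1 : B)) * b) :=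
      (hb.mono le_rfl n.le_succ).mul_left fun j _ hjn =>
        (hr.commute_barCopy_of_add_one_lt hmd_first hjn hn).add_right
          ((Commute.one_right _).smul_right _)
    have hpush := descChain_mul_barCopy_mul hr hmd le_rfl hn hq0 hq2 hb
    have hcancel : descChain r d n * ((barCopy r (m * d) n + (q ^ n * qNum q n) • (1 : B)) * b)
        = q ^ (2 * n) • (barCopy r (m * d) n * (descChain r d n * b)) := by
      rw [add_mul, smul_one_mul, mul_add, hpush, mul_smul_comm, sub_add_cancel]
    have hexp : n * (n - 1) + 2 * n = (n + 1) * (n + 1 - 1) := by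
      cases n with
      | zero => rfl
      | succ n => rw [Nat.add_sub_cancel, Nat.add_sub_cancel]; ring
    rw [capelliChain_succ, mul_assoc, ih (by omega) hskew, hcancel, ascChain_succ, descChain_succ,
      mul_smul_comm, smul_smul, ← pow_add, hexp, barCopy_mul]
    simp only [mul_assoc]

end IsCapelliPair

theorem IsHeckeFamily.capelli_identity {n : ℕ} (hr : IsHeckeFamily n q r)
    (hmd : IsCapelliPair n r m d) (hq0 : q ≠ 0) (hq2 : q ^ 2 ≠ 1)
    (hn : ∀ j, 2 ≤ j → j ≤ n → qNum q j ≠ 0) :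
    skewSymmetrizer q r n * capelliChain q r (m * d) n * skewSymmetrizer q r n
      = q ^ (n * (n - 1)) • (skewSymmetrizer q r n * ascChain r m n * descChain r d n) := by
  have hskew := hr.isSkew_skewSymmetrizer hq0 hq2 le_rfl hn
  have hidem := hskew.skewSymmetrizer_mul hq0 hq2 hn
  have hasc : Commute (skewSymmetrizer q r n) (ascChain r m n) :=
    commute_skewSymmetrizer fun j hj =>
      hr.commute_ascChain hmd.actsOnFirst_left hmd.reflection hj le_rfl
  have hdesc : Commute (skewSymmetrizer q r n) (descChain r d n) :=
    commute_skewSymmetrizer fun j hj =>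
      hr.commute_descChain hmd.actsOnFirst_right hmd.inv_reflection hj le_rfl
  rw [mul_assoc, hmd.capelliChain_mul hr.toIsBraidFamily le_rfl hq0 hq2 hskew, mul_smul_comm,
    ← hdesc.eq, ← mul_assoc (ascChain r m n), ← hasc.eq]
  simp only [← mul_assoc, hidem]

end CapelliChain

section LegEmbedding

variable {ι ι' κ V A : Type*} [Fintype ι] [DecidableEq ι] [Fintype ι'] [DecidableEq ι']
  [Fintype κ] [DecidableEq κ] [Fintype V] [DecidableEq V] [Semiring A]

open scoped Classical in
/-- Splits an index on the tensor factors `κ` into its parts on the image of `e`, labelled by `ι`,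
and on the remaining factors. -/
def legSplit (V : Type*) (e : ι ↪ κ) : (κ → V) ≃ (ι → V) × ({x // x ∉ Set.range e} → V) :=
  (Equiv.piEquivPiSubtypeProd (· ∈ Set.range e) fun _ => V).trans <|
    Equiv.prodCongrLeft fun _ => (Equiv.ofInjective e e.injective).symm.arrowCongr (Equiv.refl V)

open scoped Classical in
/-- Lets a matrix on the tensor factors `ι` act on the factors `κ` through the embedding `e`, as the
identity on the factors outside the image of `e`. -/
def legEmb (e : ι ↪ κ) : Matrix (ι → V) (ι → V) A →+* Matrix (κ → V) (κ → V) A :=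
  ((reindexRingEquiv A (legSplit V e).symm).toRingHom.comp
    (blockDiagonalRingHom _ _ A)).comp (Pi.constRingHom _ _)

open scoped Classical in
theorem legEmb_apply (e : ι ↪ κ) (X : Matrix (ι → V) (ι → V) A) (f g : κ → V) :
    legEmb e X f g = if Set.EqOn f g (Set.range e)ᶜ then X (f ∘ e) (g ∘ e) else 0 := by
  have hsplit : (legSplit V e f).2 = (legSplit V e g).2 ↔ Set.EqOn f g (Set.range e)ᶜ :=
    funext_iff.trans Subtype.forall
  exact if_congr hsplit rfl rfl

theorem legEmb_map {A' : Type*} [Semiring A'] (φ : A →+* A') (e : ι ↪ κ)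
    (X : Matrix (ι → V) (ι → V) A) : (legEmb e X).map φ = legEmb e (X.map φ) := by
  ext f g
  simp only [map_apply, legEmb_apply, apply_ite φ, map_zero]

open scoped Classical in
theorem legEmb_mul_legEmb_apply {e : ι ↪ κ} {e' : ι' ↪ κ}
    (he : Disjoint (Set.range e) (Set.range e')) (X : Matrix (ι → V) (ι → V) A)
    (Y : Matrix (ι' → V) (ι' → V) A) (f g : κ → V) :
    (legEmb e X * legEmb e' Y) f g = if Set.EqOn f g (Set.range e ∪ Set.range e')ᶜ then
      X (f ∘ e) (g ∘ e) * Y (f ∘ e') (g ∘ e') else 0 := by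
  have hright : Set.EqOn ((Set.range e).piecewise g f) g (Set.range e')ᶜ ↔
      Set.EqOn f g (Set.range e ∪ Set.range e')ᶜ := by
    rw [Set.compl_union]
    refine ⟨fun h x hx => ?_, fun h x hx => ?_⟩
    · rw [← h hx.2, Set.piecewise_eq_of_notMem _ _ _ hx.1]
    · by_cases hxe : x ∈ Set.range e
      · exact Set.piecewise_eq_of_mem _ _ _ hxe
      · rw [Set.piecewise_eq_of_notMem _ _ _ hxe, h ⟨hxe, hx⟩]
  have hcomp : (Set.range e).piecewise g f ∘ e = g ∘ e :=
    funext fun x => Set.piecewise_eq_of_mem _ _ _ ⟨x, rfl⟩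
  have hcomp' : (Set.range e).piecewise g f ∘ e' = f ∘ e' :=
    funext fun x => Set.piecewise_eq_of_notMem _ _ _ (Set.disjoint_right.mp he ⟨x, rfl⟩)
  have hunique : ∀ h ≠ (Set.range e).piecewise g f, legEmb e X f h * legEmb e' Y h g = 0 := by
    intro h hne
    rw [legEmb_apply, legEmb_apply, ite_zero_mul_ite_zero, if_neg]
    rintro ⟨hfh, hhg⟩
    refine hne (funext fun x => ?_)
    by_cases hx : x ∈ Set.range e
    · rw [Set.piecewise_eq_of_mem _ _ _ hx, hhg (Set.disjoint_left.mp he hx)]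
    · rw [Set.piecewise_eq_of_notMem _ _ _ hx, hfh hx]
  rw [mul_apply, Fintype.sum_eq_single _ hunique, legEmb_apply, legEmb_apply, hcomp, hcomp',
    if_pos (Set.piecewise_eqOn_compl _ g f).symm, mul_ite, mul_zero, if_congr hright rfl rfl]

theorem commute_legEmb {e : ι ↪ κ} {e' : ι' ↪ κ} (he : Disjoint (Set.range e) (Set.range e'))
    {X : Matrix (ι → V) (ι → V) A} {Y : Matrix (ι' → V) (ι' → V) A}
    (hXY : ∀ f g f' g', Commute (X f g) (Y f' g')) : Commute (legEmb e X) (legEmb e' Y) := by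
  ext f g
  rw [legEmb_mul_legEmb_apply he, legEmb_mul_legEmb_apply he.symm, Set.union_comm,
    (hXY _ _ _ _).eq]

end LegEmbedding

section Windows

variable {N : ℕ} {A : Type*} [Ring A]

/-- The inclusion of the `a` consecutive tensor factors `i, …, i + a - 1` among `k` factors. -/
def window {i a k : ℕ} (h : i + a ≤ k) : Fin a ↪ Fin k :=
  (Fin.natAddEmb i).trans (Fin.castLEEmb h)

theorem mem_range_window {i a k : ℕ} {h : i + a ≤ k} {x : Fin k} :
    x ∈ Set.range (window h) ↔ i ≤ x ∧ x < i + a := by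
  refine ⟨?_, fun hx => ⟨⟨x - i, by omega⟩, Fin.ext (Nat.add_sub_cancel' hx.1)⟩⟩
  rintro ⟨y, rfl⟩
  exact ⟨Nat.le_add_right i y, Nat.add_lt_add_left y.isLt i⟩

theorem disjoint_range_window {i a j b k : ℕ} (hi : i + a ≤ k) (hj : j + b ≤ k)
    (hij : i + a ≤ j) : Disjoint (Set.range (window hi)) (Set.range (window hj)) := by
  refine Set.disjoint_left.mpr fun x hx hx' => ?_
  rw [mem_range_window] at hx hx'
  omega

theorem eqOn_iff_of_compl_range_subset {ι κ V : Type*} {e : ι → κ} {t : Set κ}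
    (ht : (Set.range e)ᶜ ⊆ t) {f g : κ → V} :
    Set.EqOn f g t ↔ Set.EqOn f g (Set.range e)ᶜ ∧ Set.EqOn (f ∘ e) (g ∘ e) (e ⁻¹' t) := by
  refine ⟨fun h => ⟨h.mono ht, fun x hx => h hx⟩, fun h x hx => ?_⟩
  by_cases hxe : x ∈ Set.range e
  · obtain ⟨y, rfl⟩ := hxe
    exact h.2 hx
  · exact h.1 hxe

open scoped Classical in
theorem embR_apply {k i : ℕ} (hi : i + 1 < k) (R : RMat N) (f g : Fin k → Fin N) :
    embR k R i f g = if Set.EqOn f g {x | x.val ≠ i ∧ x.val ≠ i + 1} then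
      R (f ⟨i, Nat.lt_of_succ_lt hi⟩, f ⟨i + 1, hi⟩) (g ⟨i, Nat.lt_of_succ_lt hi⟩, g ⟨i + 1, hi⟩)
    else 0 := by
  rw [embR, dif_pos hi]
  exact if_congr (forall_congr' fun _ => and_imp.symm) rfl rfl

theorem embR_add_eq_legEmb {i a k : ℕ} (h : i + a ≤ k) (R : RMat N) {j : ℕ} (hj : j + 1 < a) :
    embR k R (i + j) = legEmb (window h) (embR a R j) := by
  classical
  ext f g
  have hsub : (Set.range (window h))ᶜ ⊆ {x | x.val ≠ i + j ∧ x.val ≠ i + j + 1} := by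
    intro x hx
    rw [Set.mem_compl_iff, mem_range_window] at hx
    change x.val ≠ i + j ∧ x.val ≠ i + j + 1
    omega
  have hpre : window h ⁻¹' {x | x.val ≠ i + j ∧ x.val ≠ i + j + 1}
      = {y | y.val ≠ j ∧ y.val ≠ j + 1} := by
    ext y
    simp [window, add_assoc]
  rw [legEmb_apply, embR_apply hj, embR_apply (by omega), ← ite_and]
  exact if_congr (by rw [eqOn_iff_of_compl_range_subset hsub, hpre]) rfl rfl

open scoped Classical in
theorem emb1_apply {k : ℕ} (hk : 0 < k) (X : Matrix (Fin N) (Fin N) A) (f g : Fin k → Fin N) :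
    emb1 k X f g = if Set.EqOn f g {x | x.val ≠ 0} then X (f ⟨0, hk⟩) (g ⟨0, hk⟩) else 0 := by
  rw [emb1, dif_pos hk]
  exact if_congr Iff.rfl rfl rfl

theorem emb1_eq_legEmb {a k : ℕ} (ha : 0 < a) (h : 0 + a ≤ k) (X : Matrix (Fin N) (Fin N) A) :
    emb1 k X = legEmb (window h) (emb1 a X) := by
  classical
  ext f g
  have hsub : (Set.range (window h))ᶜ ⊆ {x | x.val ≠ 0} := by
    intro x hx
    rw [Set.mem_compl_iff, mem_range_window] at hx
    change x.val ≠ 0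
    omega
  have hpre : window h ⁻¹' {x | x.val ≠ 0} = {y | y.val ≠ 0} := by
    ext y
    simp [window]
  rw [legEmb_apply, emb1_apply ha, emb1_apply (by omega), ← ite_and]
  exact if_congr (by rw [eqOn_iff_of_compl_range_subset hsub, hpre]) rfl rfl

theorem embR_two_zero (R : RMat N) :
    embR 2 R 0 = reindexRingEquiv ℂ (finTwoArrowEquiv (Fin N)).symm R := by
  ext f g
  simp [embR, Fin.forall_fin_two]

theorem emb1_one (X : Matrix (Fin N) (Fin N) A) :
    emb1 1 X = reindexRingEquiv A (Equiv.funUnique (Fin 1) (Fin N)).symm X := by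
  ext f g
  simp [emb1]

end Windows

section TensorGenerators

variable {N k : ℕ} {A : Type*} [Ring A]

theorem emb1_mul (hk : 0 < k) (X Y : Matrix (Fin N) (Fin N) A) :
    emb1 k (X * Y) = emb1 k X * emb1 k Y := by
  have h : 0 + 1 ≤ k := by omega
  simp only [emb1_eq_legEmb one_pos h, emb1_one, map_mul]

theorem embR_of_le {i : ℕ} (hi : k ≤ i + 1) (R : RMat N) : embR k R i = 1 :=
  Matrix.ext fun _ _ => dif_neg hi.not_gt

theorem embR_one (i : ℕ) : embR k (1 : RMat N) i = 1 := by
  rcases Nat.lt_or_ge (i + 1) k with hi | hi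
  · rw [← add_zero i, embR_add_eq_legEmb hi 1 one_lt_two, embR_two_zero, map_one, map_one]
  · exact embR_of_le hi 1

theorem embR_mul (i : ℕ) (R S : RMat N) : embR k (R * S) i = embR k R i * embR k S i := by
  rcases Nat.lt_or_ge (i + 1) k with hi | hi
  · rw [← add_zero i]
    simp only [embR_add_eq_legEmb hi _ one_lt_two, embR_two_zero, map_mul]
  · simp only [embR_of_le hi, mul_one]

theorem embR_smul_add_one {i : ℕ} (hi : i + 1 < k) (c : ℂ) (R : RMat N) :
    embR k (c • R + 1) i = c • embR k R i + 1 := by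
  classical
  rw [← embR_one i]
  ext f g
  simp only [embR_apply hi, Matrix.add_apply, Matrix.smul_apply, smul_ite, smul_zero]
  split_ifs <;> simp

variable [Algebra ℂ A]

theorem liftC_one : liftC A (1 : TMat N k ℂ) = 1 :=
  map_one (algebraMap ℂ A).mapMatrix

theorem liftC_add (X Y : TMat N k ℂ) : liftC A (X + Y) = liftC A X + liftC A Y :=
  map_add (algebraMap ℂ A).mapMatrix X Y

theorem liftC_sub (X Y : TMat N k ℂ) : liftC A (X - Y) = liftC A X - liftC A Y :=
  map_sub (algebraMap ℂ A).mapMatrix X Y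

theorem liftC_mul (X Y : TMat N k ℂ) : liftC A (X * Y) = liftC A X * liftC A Y :=
  map_mul (algebraMap ℂ A).mapMatrix X Y

theorem liftC_smul (c : ℂ) (X : TMat N k ℂ) : liftC A (c • X) = c • liftC A X :=
  map_smul (Algebra.ofId ℂ A).mapMatrix c X

/-- The action of `R` in the factors `i` and `i + 1` of the `k`-th tensor power, by matrices over
`A`; trivial if there are no such factors. -/
def tensorHom (N k : ℕ) (A : Type*) [Ring A] [Algebra ℂ A] (i : ℕ) : RMat N →* TMat N k A where
  toFun R := liftC A (embR k R i)
  map_one' := by rw [embR_one, liftC_one]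
  map_mul' R S := by rw [embR_mul, liftC_mul]

/-- The generators `R_1, R_2, …` on the `k`-th tensor power attached to an invertible matrix `R`;
indexed from `0`. -/
def tensorGen (k : ℕ) (A : Type*) [Ring A] [Algebra ℂ A] (R : (RMat N)ˣ) (i : ℕ) :
    (TMat N k A)ˣ :=
  Units.map (tensorHom N k A i) R

theorem val_tensorGen (R : (RMat N)ˣ) (i : ℕ) :
    (tensorGen k A R i : TMat N k A) = liftC A (embR k R i) :=
  rfl

theorem val_inv_tensorGen (R : (RMat N)ˣ) (i : ℕ) :
    (↑(tensorGen k A R i)⁻¹ : TMat N k A) = liftC A (embR k ↑R⁻¹ i) :=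
  rfl

theorem liftC_embR_add_eq_legEmb {i a : ℕ} (h : i + a ≤ k) (R : RMat N) {j : ℕ} (hj : j + 1 < a) :
    liftC A (embR k R (i + j)) = legEmb (window h) (liftC A (embR a R j)) := by
  rw [embR_add_eq_legEmb h R hj]
  exact legEmb_map (algebraMap ℂ A) _ _

theorem commute_liftC_embR_legEmb {i j a : ℕ} (hi : i + 2 ≤ k) (hj : j + a ≤ k)
    (hij : i + 2 ≤ j ∨ j + a ≤ i) (R : RMat N) (Y : TMat N a A) :
    Commute (liftC A (embR k R i)) (legEmb (window hj) Y) := by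
  rw [← add_zero i, liftC_embR_add_eq_legEmb hi R one_lt_two]
  refine commute_legEmb ?_ fun f g f' g' => Algebra.commutes _ _
  exact hij.elim (disjoint_range_window hi hj) fun h => (disjoint_range_window hj hi h).symm

theorem actsOnFirst_emb1 (R : (RMat N)ˣ) (X : Matrix (Fin N) (Fin N) A) :
    ActsOnFirst k (tensorGen k A R) (emb1 k X) := by
  intro i hi hik
  have h : 0 + 1 ≤ k := by omega
  rw [val_tensorGen, emb1_eq_legEmb one_pos h]
  exact commute_liftC_embR_legEmb hik h (Or.inr hi) _ _

theorem hecke_mul_self {R : RMat N} {q : ℂ} (hq0 : q ≠ 0) (hH : HeckeCond R q) :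
    R * R = (q - q⁻¹) • R + 1 := by
  have hexpand : (q • (1 : RMat N) - R) * (q⁻¹ • (1 : RMat N) + R)
      = (q * q⁻¹) • (1 : RMat N) + (q - q⁻¹) • R - R * R := by
    simp only [sub_mul, mul_add, smul_mul_assoc, one_mul, mul_one, mul_smul_comm]
    module
  rw [HeckeCond, hexpand, mul_inv_cancel₀ hq0, one_smul, sub_eq_zero] at hH
  rw [← hH, add_comm]

theorem isHeckeFamily_tensorGen {R : (RMat N)ˣ} {q : ℂ} (hq0 : q ≠ 0) (hbr : IsBraiding R.val)
    (hH : HeckeCond R.val q) : IsHeckeFamily k q (tensorGen k A R) where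
  commute i j hij hj := by
    have h := commute_liftC_embR_legEmb (i := i) (by omega) hj (Or.inl hij) R.val
      (liftC A (embR 2 R.val 0))
    rw [← liftC_embR_add_eq_legEmb hj R.val one_lt_two] at h
    exact Commute.units_of_val h
  braid i hi := by
    have h := congrArg (fun X => legEmb (window (i := i) hi) (liftC A X)) hbr
    simp only [liftC_mul, map_mul, ← liftC_embR_add_eq_legEmb hi R.val (show 0 + 1 < 3 by omega),
      ← liftC_embR_add_eq_legEmb hi R.val (show 1 + 1 < 3 by omega)] at h
    exact Units.ext h
  hecke i hi := by
    simp only [val_tensorGen]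
    rw [← liftC_mul, ← embR_mul, hecke_mul_self hq0 hH, embR_smul_add_one hi, liftC_add,
      liftC_smul, liftC_one]

theorem isCapelliPair_emb1 {R : (RMat N)ˣ} {M D : Matrix (Fin N) (Fin N) A} (hk : 2 ≤ k)
    (hRE : RERel R.val M) (hDD : DDRel (↑R⁻¹ : RMat N) D)
    (hperm : PermRel R.val (↑R⁻¹ : RMat N) M D) :
    IsCapelliPair k (tensorGen k A R) (emb1 k M) (emb1 k D) := by
  have h : 0 + 2 ≤ k := by omega
  have hR (S : RMat N) : legEmb (window h) (liftC A (embR 2 S 0)) = liftC A (embR k S 0) :=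
    (liftC_embR_add_eq_legEmb h S one_lt_two).symm
  have hX (X : Matrix (Fin N) (Fin N) A) : legEmb (window h) (emb1 2 X) = emb1 k X :=
    (emb1_eq_legEmb two_pos h X).symm
  have hRE' := congrArg (legEmb (window h)) hRE
  have hDD' := congrArg (legEmb (window h)) hDD
  have hperm' := congrArg (legEmb (window h)) hperm
  simp only [map_mul, map_add, map_one, hR, hX] at hRE' hDD' hperm'
  refine ⟨actsOnFirst_emb1 R M, actsOnFirst_emb1 R D, ?_, ?_, hperm'⟩
  · simpa only [commute_iff_eq, val_tensorGen, ← mul_assoc] using hRE'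
  · rw [← Commute.units_inv_left_iff]
    simpa only [commute_iff_eq, val_inv_tensorGen, ← mul_assoc] using hDD'

theorem copyX_eq_barCopy (R : (RMat N)ˣ) (X : Matrix (Fin N) (Fin N) A) :
    copyX k R.val (↑R⁻¹ : RMat N) X = barCopy (tensorGen k A R) (emb1 k X) := by
  funext i
  induction i with
  | zero => rfl
  | succ i ih => rw [copyX, ih]; rfl

theorem upChain_eq_ascChain (R : (RMat N)ˣ) (X : Matrix (Fin N) (Fin N) A) (n : ℕ) :
    upChain k R.val (↑R⁻¹ : RMat N) X n = ascChain (tensorGen k A R) (emb1 k X) n := by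
  rw [upChain, copyX_eq_barCopy, ascChain]

theorem downChain_eq_descChain (R : (RMat N)ˣ) (X : Matrix (Fin N) (Fin N) A) (n : ℕ) :
    downChain k R.val (↑R⁻¹ : RMat N) X n = descChain (tensorGen k A R) (emb1 k X) n := by
  rw [downChain, copyX_eq_barCopy, descChain]

theorem capChainA_eq_capelliChain (R : (RMat N)ˣ) (q : ℂ) (X : Matrix (Fin N) (Fin N) A) (n : ℕ) :
    capChainA k R.val (↑R⁻¹ : RMat N) q X n
      = capelliChain q (tensorGen k A R) (emb1 k X) n := by
  rw [capChainA, copyX_eq_barCopy, capelliChain]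

theorem liftC_Asym_eq_skewSymmetrizer (R : (RMat N)ˣ) (q : ℂ) (n : ℕ) :
    liftC A (Asym k R.val q n) = skewSymmetrizer q (tensorGen k A R) n := by
  induction n using Nat.twoStepInduction with
  | zero => exact liftC_one
  | one => exact liftC_one
  | more n _ ih =>
    rw [Asym, skewSymmetrizer, ← ih, val_tensorGen]
    simp only [liftC_smul, liftC_mul, liftC_sub, liftC_one]

end TensorGenerators

/-- matrix Capelli identity, skew-symmetric form:
`A^(k) L_{1̄}(L_{2̄}+qI)⋯(L_{k̄}+q^{k−1}(k−1)_q I) A^(k)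
  = q^{k(k−1)} A^(k) M_{1̄}⋯M_{k̄} D_{k̄}⋯D_{1̄}`, with `L = MD`. -/
theorem statement2 {N : ℕ} (R Rinv : RMat N) (q : ℂ)
    (hq0 : q ≠ 0) (hq1 : q ≠ 1) (hqm1 : q ≠ -1)
    (hinv : R * Rinv = 1) (hinv' : Rinv * R = 1)
    (hbr : IsBraiding R) (hH : HeckeCond R q)
    {A : Type _} [Ring A] [Algebra ℂ A]
    (M D : Matrix (Fin N) (Fin N) A)
    (hRE : RERel R M) (hDD : DDRel Rinv D) (hperm : PermRel R Rinv M D) :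
    ∀ k : ℕ, 1 ≤ k → (∀ j : ℕ, 2 ≤ j → j ≤ k → qNum q j ≠ 0) →
      liftC A (Asym k R q k) * capChainA k R Rinv q (M * D) k * liftC A (Asym k R q k)
        = (q ^ (k * (k - 1))) •
            (liftC A (Asym k R q k) * upChain k R Rinv M k * downChain k R Rinv D k) := by
  intro k hk hqn
  have hq2 : q ^ 2 ≠ 1 := sq_ne_one_iff.mpr ⟨hq1, hqm1⟩
  lift R to (RMat N)ˣ using ⟨⟨R, Rinv, hinv, hinv'⟩, rfl⟩
  obtain rfl : (↑R⁻¹ : RMat N) = Rinv := Units.inv_eq_of_mul_eq_one_right hinv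
  rcases hk.eq_or_lt with rfl | hk2
  · simp [capChainA, upChain, downChain, copyX, Asym, liftC_one, emb1_mul, qNum_zero]
  have hpair := isCapelliPair_emb1 hk2 hRE hDD hperm
  have hHecke := isHeckeFamily_tensorGen (k := k) (A := A) hq0 hbr hH
  simpa only [liftC_Asym_eq_skewSymmetrizer, capChainA_eq_capelliChain, upChain_eq_ascChain,
    downChain_eq_descChain, emb1_mul hk] using hHecke.capelli_identity hpair hq0 hq2 hqn
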